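/- Let k be an algebraically closed field of characteristic zero. If a binary sextic F has a zero of multiplicity at least four, i.e. F = L⁴·Q for some linear form L and binary quadratic form Q, then every homogeneous SL₂-invariant P ∈ k[a,b,c,d,e,f,g] of positive degree vanishes at the coefficient vector of F. (Forms with a quadruple zero lie in the null cone: all positive-degree invariants vanish there.) -/

import Mathlib

/-! If `L = 0` then `v = 0`, and a form of positive degree vanishes there. Otherwise the
Hilbert–Mumford argument applies: after an `SL₂` change of coordinates `L = x`, and the torus
element `diag(c, c⁻¹)` turns `x⁴(r'x² + s'xy + t'y²)` into the sextic `r'c⁶x⁶ + s'c⁴x⁵y + t'c²x⁴y²`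
(`exists_degeneration`). Hence the coefficient vector degenerates to `0` along a polynomial curve
in `c` which lies in the `SL₂`-orbit of `v` for all `c ≠ 0`. An invariant `P` is constant on the
curve for `c ≠ 0`, hence, the field being infinite, also at `c = 0`, where it takes the value
`P(0) = 0`. -/

open MvPolynomial

/-- The binary sextic `a x^6 + 6b x^5 y + 15c x^4 y^2 + 20d x^3 y^3 + 15e x^2 y^4 +
6f x y^5 + g y^6` with coefficient vector `v = (a,b,c,d,e,f,g)`. -/
noncomputable def sextic {A : Type*} [CommRing A] (v : Fin 7 → A) :
    MvPolynomial (Fin 2) A :=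
  C (v 0) * X 0 ^ 6 + C (6 * v 1) * X 0 ^ 5 * X 1 + C (15 * v 2) * X 0 ^ 4 * X 1 ^ 2 +
    C (20 * v 3) * X 0 ^ 3 * X 1 ^ 3 + C (15 * v 4) * X 0 ^ 2 * X 1 ^ 4 +
    C (6 * v 5) * X 0 * X 1 ^ 5 + C (v 6) * X 1 ^ 6

/-- The substituted form `F(x m₁₁ + y m₂₁, x m₁₂ + y m₂₂)`. -/
noncomputable def substAct {A : Type*} [CommRing A] (M : Matrix (Fin 2) (Fin 2) A)
    (F : MvPolynomial (Fin 2) A) : MvPolynomial (Fin 2) A :=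
  aeval (fun i => C (M 0 i) * X 0 + C (M 1 i) * X 1) F

/-- `P ∈ k[a,…,g]` is SL₂-invariant: whenever `det M = 1` and `w` is the coefficient
vector of the substituted sextic, `P(w) = P(v)`. -/
def IsSL2Invariant {k : Type*} [CommRing k] (P : MvPolynomial (Fin 7) k) : Prop :=
  ∀ M : Matrix (Fin 2) (Fin 2) k, M.det = 1 →
    ∀ v w : Fin 7 → k, sextic w = substAct M (sextic v) →
      eval w P = eval v P

/-- The coefficient vector of the sextic `r c⁶ x⁶ + s c⁴ x⁵ y + t c² x⁴ y²`; the divisions undo the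
binomial factors in `sextic`. -/
def degenCurve {k : Type*} [Field k] (r s t c : k) : Fin 7 → k :=
  ![r * c ^ 6, s / 6 * c ^ 4, t / 15 * c ^ 2, 0, 0, 0, 0]

theorem sextic_degenCurve {k : Type*} [Field k] [CharZero k] (r s t c : k) :
    sextic (degenCurve r s t c) =
      C (r * c ^ 6) * X 0 ^ 6 + C (s * c ^ 4) * X 0 ^ 5 * X 1 +
        C (t * c ^ 2) * X 0 ^ 4 * X 1 ^ 2 := by
  have h1 : 6 * (s / 6 * c ^ 4) = s * c ^ 4 := by field_simp
  have h2 : 15 * (t / 15 * c ^ 2) = t * c ^ 2 := by field_simp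
  simp only [sextic, degenCurve, Matrix.cons_val, h1, h2]
  simp

theorem sextic_injective_zero {k : Type*} [Field k] [CharZero k] (v : Fin 7 → k)
    (hv : sextic v = 0) : v = 0 := by
  -- Dehomogenize at `y = 1` and compare coefficients in one variable.
  have h := congrArg (aeval (fun i : Fin 2 => (![Polynomial.X, 1] i : Polynomial k))) hv
  have h' : (.C (v 0) * .X ^ 6 + .C (6 * v 1) * .X ^ 5 + .C (15 * v 2) * .X ^ 4 +
      .C (20 * v 3) * .X ^ 3 + .C (15 * v 4) * .X ^ 2 + .C (6 * v 5) * .X + .C (v 6) :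
      Polynomial k) = 0 := by
    simpa [sextic] using h
  have hc (n : ℕ) := congrArg (fun f => Polynomial.coeff f n) h'
  simp only [Polynomial.coeff_add, Polynomial.coeff_C_mul, Polynomial.coeff_X_pow,
    Polynomial.coeff_X, Polynomial.coeff_C, Polynomial.coeff_zero] at hc
  have h0 : v 0 = 0 := by simpa using hc 6
  have h1 : v 1 = 0 := by simpa using hc 5
  have h2 : v 2 = 0 := by simpa using hc 4
  have h3 : v 3 = 0 := by simpa using hc 3
  have h4 : v 4 = 0 := by simpa using hc 2
  have h5 : v 5 = 0 := by simpa using hc 1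
  have h6 : v 6 = 0 := by simpa using hc 0
  funext i
  fin_cases i <;> simp [*]

/-- When `L ≠ 0`, the torus degeneration of `L⁴ Q` stays in the `SL₂`-orbit for `c ≠ 0`. -/
theorem exists_degeneration {k : Type*} [Field k] [CharZero k]
    (v : Fin 7 → k) (p q r s t : k)
    (hv : sextic v = (C p * X 0 + C q * X 1) ^ 4 *
      (C r * X 0 ^ 2 + C s * X 0 * X 1 + C t * X 1 ^ 2))
    (hpq : ∃ α β : k, α * p + β * q = 1) :
    ∃ r' s' t' : k, ∀ c : k, c ≠ 0 → ∃ M : Matrix (Fin 2) (Fin 2) k, M.det = 1 ∧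
      sextic (degenCurve r' s' t' c) = substAct M (sextic v) := by
  obtain ⟨α, β, h⟩ := hpq
  refine ⟨r * α ^ 2 + s * α * β + t * β ^ 2,
    -2 * r * α * q + s * (α * p - β * q) + 2 * t * β * p,
    r * q ^ 2 - s * p * q + t * p ^ 2, fun c hc => ?_⟩
  -- This substitution sends `L = p x + q y` to `c x`.
  refine ⟨!![c * α, c * β; -q * c⁻¹, p * c⁻¹], ?_, ?_⟩
  · rw [Matrix.det_fin_two_of]
    field_simp
    linear_combination h
  · have hcd : (C c * C c⁻¹ : MvPolynomial (Fin 2) k) = 1 := by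
      rw [← C_mul, mul_inv_cancel₀ hc, C_1]
    have hC : (C α * C p + C β * C q : MvPolynomial (Fin 2) k) = 1 := by
      rw [← C_mul, ← C_mul, ← C_add, h, C_1]
    rw [sextic_degenCurve, hv]
    simp only [substAct, map_add, map_mul, map_pow, aeval_X, algHom_C, algebraMap_eq,
      Matrix.of_apply, Matrix.cons_val', Matrix.cons_val, map_sub, map_neg, map_ofNat]
    generalize (C c⁻¹ : MvPolynomial (Fin 2) k) = d at *
    have hL : (C p * (C c * C α * X 0 + -C q * d * X 1) +
        C q * (C c * C β * X 0 + C p * d * X 1) : MvPolynomial (Fin 2) k) = C c * X 0 := by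
      linear_combination C c * X 0 * hC
    rw [hL]
    generalize (C c : MvPolynomial (Fin 2) k) = e at *
    -- The powers of `d = c⁻¹` coming from `y` are absorbed by the factor `c⁴` of `L⁴`.
    have hd1 : e ^ 5 * d = e ^ 4 := by linear_combination e ^ 4 * hcd
    have hd2 : e ^ 4 * d ^ 2 = e ^ 2 := by linear_combination (e ^ 3 * d + e ^ 2) * hcd
    linear_combination
      (-(-2 * C r * C α * C q + C s * (C α * C p - C β * C q) + 2 * C t * C β * C p)
        * X 0 ^ 5 * X 1) * hd1
      - ((C r * C q ^ 2 - C s * C p * C q + C t * C p ^ 2) * X 0 ^ 4 * X 1 ^ 2) * hd2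

theorem eval_zero_of_isHomogeneous {k : Type*} [Field k] (P : MvPolynomial (Fin 7) k) (n : ℕ)
    (hn : 0 < n) (hP : P.IsHomogeneous n) : eval 0 P = 0 := by
  rw [MvPolynomial.eval_zero, constantCoeff_eq]
  exact hP.coeff_eq_zero (by simpa using hn.ne)

/-- A binary sextic with a zero of multiplicity at least four,
`F = L⁴·Q` with `L = p x + q y` linear and `Q = r x² + s x y + t y²` quadratic, lies in
the null cone: every homogeneous SL₂-invariant of positive degree vanishes at its
coefficient vector. -/
theorem stmt7 {k : Type*} [Field k] [IsAlgClosed k] [CharZero k]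
    (v : Fin 7 → k) (p q r s t : k)
    (hv : sextic v = (C p * X 0 + C q * X 1) ^ 4 *
      (C r * X 0 ^ 2 + C s * X 0 * X 1 + C t * X 1 ^ 2))
    (P : MvPolynomial (Fin 7) k) (n : ℕ) (hn : 0 < n)
    (hP : P.IsHomogeneous n) (hinv : IsSL2Invariant P) :
    eval v P = 0 := by
  have hP0 := eval_zero_of_isHomogeneous P n hn hP
  by_cases h0 : p = 0 ∧ q = 0
  · obtain ⟨rfl, rfl⟩ := h0
    rw [sextic_injective_zero v (by rw [hv]; simp), hP0]
  · have hpq : ∃ α β : k, α * p + β * q = 1 := by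
      by_cases hp : p = 0
      · have hq : q ≠ 0 := fun hq => h0 ⟨hp, hq⟩
        exact ⟨0, q⁻¹, by simp [hq]⟩
      · exact ⟨p⁻¹, 0, by simp [hp]⟩
    obtain ⟨r', s', t', hM⟩ := exists_degeneration v p q r s t hv hpq
    -- `g(c)` is the value of `P` at the point of parameter `c` on the curve.
    let W : Fin 7 → Polynomial k :=
      ![.C r' * .X ^ 6, .C (s' / 6) * .X ^ 4, .C (t' / 15) * .X ^ 2, 0, 0, 0, 0]
    let g : Polynomial k := aeval W P
    have hg : ∀ c, g.eval c = eval (degenCurve r' s' t' c) P := by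
      intro c
      have hW : (fun i => (W i).eval c) = degenCurve r' s' t' c := by
        funext i
        fin_cases i <;> simp [W, degenCurve]
      rw [← hW]
      have := MvPolynomial.comp_aeval_apply (φ := Polynomial.aeval (R := k) c) W P
      simpa [g, Polynomial.coe_aeval_eq_eval, MvPolynomial.aeval_eq_eval] using this
    have hconst : g = Polynomial.C (eval v P) := by
      refine Polynomial.eq_of_infinite_eval_eq _ _ ?_
      refine (Set.finite_singleton (0 : k)).infinite_compl.mono fun c hc => ?_
      obtain ⟨M, hdet, hw⟩ := hM c hc
      simp only [Set.mem_ofPred_eq, hg, Polynomial.eval_C]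
      exact hinv M hdet v _ hw
    have h1 := hg 0
    have hz : degenCurve r' s' t' 0 = 0 := by
      funext i
      fin_cases i <;> simp [degenCurve]
    rw [hz, hP0, hconst, Polynomial.eval_C] at h1
    exact h1
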